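/- Let p > 1 and on the interval (0,1) set d(x) := min{x, 1−x}. There exists a constant c = c(p) > 0 such that for every u ∈ C_c^∞((0,1)) and every D ≥ 1/2, one has sup_{x ∈ (0,1)} { |u(x)| · (d(x))^{1/p − 1} · X^{1/p}(d(x)/D) } ≤ c · ( ∫_0^1 |u'(t)|^p dt − ((p−1)/p)^p ∫_0^1 |u(t)|^p / (d(t))^p dt )^{1/p}. -/

import Mathlib

open MeasureTheory Metric Set

/-!
If `f ≥ 0` satisfies the Riccati inequality `f' + (p - 1) f ^ (p / (p - 1)) ≤ -V`, Young's
inequality gives `(f |u| ^ p)' ≤ |u'| ^ p - V |u| ^ p`, and integrating bounds the boundary terms of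
`f |u| ^ p` by the energy on the right. With `V = ((p - 1) / p) ^ p / t ^ p`, two solutions are
available: the classical multiplier `f₀ = ((p - 1) / p) ^ (p - 1) t ^ (1 - p)`, and its logarithmic
perturbation `f₁ = f₀ (1 - X(t / D) / p)`. Using `f₀` on `[0, x]` and `f₁` on `[x, b]`, the boundary
terms at `x` differ by `f₀(x) X(x / D) |u(x)| ^ p / p`, which is the quantity to be estimated. The
half of the interval that does not contain `x` contributes a nonnegative amount.
-/

namespace HardyMorrey

variable {p q a b x D L η : ℝ} {u : ℝ → ℝ}

/-! ### Riccati multipliers -/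

theorem mul_deriv_abs_rpow_le (hpq : p.HolderConjugate q) {f : ℝ} (hf : 0 ≤ f) (y z : ℝ) :
    f * (p * |y| ^ (p - 2) * y * z) ≤ |z| ^ p + (p - 1) * f ^ q * |y| ^ p := by
  have hp : 0 < p := hpq.pos
  have habs : |y| ^ (p - 2) * y * z ≤ |z| * |y| ^ (p - 1) := by
    have hsplit : |y| ^ (p - 1) = |y| ^ (p - 2) * |y| := by
      rw [← Real.rpow_add_one' (abs_nonneg y) (by linarith [hpq.lt])]
      ring_nf
    calc |y| ^ (p - 2) * y * z = |y| ^ (p - 2) * (y * z) := by ring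
      _ ≤ |y| ^ (p - 2) * (|y| * |z|) :=
        mul_le_mul_of_nonneg_left ((le_abs_self _).trans_eq (abs_mul y z)) (by positivity)
      _ = |z| * |y| ^ (p - 1) := by rw [hsplit]; ring
  have hpow : (f * |y| ^ (p - 1)) ^ q = f ^ q * |y| ^ p := by
    rw [Real.mul_rpow hf (by positivity), ← Real.rpow_mul (abs_nonneg y), hpq.sub_one_mul_conj]
  calc f * (p * |y| ^ (p - 2) * y * z) = p * (f * (|y| ^ (p - 2) * y * z)) := by ring
    _ ≤ p * (f * (|z| * |y| ^ (p - 1))) := by gcongr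
    _ = p * (|z| * (f * |y| ^ (p - 1))) := by ring
    _ ≤ p * (|z| ^ p / p + (f * |y| ^ (p - 1)) ^ q / q) := by
      gcongr
      exact Real.young_inequality_of_nonneg (abs_nonneg z) (by positivity) hpq
    _ = |z| ^ p + p / q * (f ^ q * |y| ^ p) := by rw [hpow]; field_simp
    _ = |z| ^ p + (p - 1) * f ^ q * |y| ^ p := by rw [hpq.div_conj_eq_sub_one]; ring

theorem sub_le_integral_of_riccati (hpq : p.HolderConjugate q) {u' f f' V : ℝ → ℝ} (hab : a ≤ b)
    (hcont : ContinuousOn (fun t ↦ f t * |u t| ^ p) (Icc a b))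
    (hu : ∀ t ∈ Ioo a b, HasDerivAt u (u' t) t) (hf : ∀ t ∈ Ioo a b, HasDerivAt f (f' t) t)
    (hf₀ : ∀ t ∈ Ioo a b, 0 ≤ f t) (hric : ∀ t ∈ Ioo a b, f' t + (p - 1) * f t ^ q ≤ -V t)
    (hint : IntervalIntegrable (fun t ↦ |u' t| ^ p - V t * |u t| ^ p) volume a b) :
    f b * |u b| ^ p - f a * |u a| ^ p ≤ ∫ t in a..b, (|u' t| ^ p - V t * |u t| ^ p) := by
  refine intervalIntegral.sub_le_integral_of_hasDeriv_right_of_le hab hcont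
    (fun t ht ↦ ((hf t ht).mul
      ((hasDerivAt_abs_rpow (u t) hpq.lt).comp t (hu t ht))).hasDerivWithinAt)
    ((intervalIntegrable_iff_integrableOn_Icc_of_le hab).1 hint) fun t ht ↦ ?_
  have hyoung := mul_deriv_abs_rpow_le hpq (hf₀ t ht) (u t) (u' t)
  have hric' := mul_le_mul_of_nonneg_right (hric t ht) (Real.rpow_nonneg (abs_nonneg (u t)) p)
  simp only [Function.comp_apply]
  linarith

/-! ### The Hardy potential -/

theorem exp_neg_le_one_sub_add_sq {z : ℝ} (hz : 0 ≤ z) : Real.exp (-z) ≤ 1 - z + z ^ 2 := by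
  rw [Real.exp_neg, inv_le_iff_one_le_mul₀ (Real.exp_pos z)]
  calc 1 ≤ 1 + z ^ 3 := le_add_of_nonneg_right (by positivity)
    _ = (1 - z + z ^ 2) * (z + 1) := by ring
    _ ≤ (1 - z + z ^ 2) * Real.exp z := by
      gcongr
      · nlinarith [sq_nonneg (z - 1)]
      · exact Real.add_one_le_exp z

theorem one_sub_rpow_le (hq : 0 ≤ q) (hη : η ∈ Icc 0 1) :
    (1 - η) ^ q ≤ 1 - q * η + (q * η) ^ 2 :=
  calc (1 - η) ^ q ≤ Real.exp (-η) ^ q :=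
        Real.rpow_le_rpow (sub_nonneg.2 hη.2) (Real.one_sub_le_exp_neg η) hq
    _ = Real.exp (-(q * η)) := by rw [← Real.exp_mul]; ring_nf
    _ ≤ 1 - q * η + (q * η) ^ 2 := exp_neg_le_one_sub_add_sq (mul_nonneg hq hη.1)

/-- The classical Hardy multiplier `((p - 1) / p) ^ (p - 1) t ^ (1 - p)`, lowered by the relative
amount `η`. -/
noncomputable def hardyMultiplier (p : ℝ) (η : ℝ → ℝ) (t : ℝ) : ℝ :=
  ((p - 1) / p) ^ (p - 1) * (t ^ (1 - p) * (1 - η t))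

theorem hardyMultiplier_nonneg (hp : 1 ≤ p) {η : ℝ → ℝ} {t : ℝ} (ht : 0 ≤ t) (hη : η t ≤ 1) :
    0 ≤ hardyMultiplier p η t := by
  have hconst : 0 ≤ (p - 1) / p := div_nonneg (sub_nonneg.2 hp) (zero_le_one.trans hp)
  exact mul_nonneg (Real.rpow_nonneg hconst _)
    (mul_nonneg (Real.rpow_nonneg ht _) (sub_nonneg.2 hη))

theorem hasDerivAt_hardyMultiplier (p : ℝ) {η : ℝ → ℝ} {η' t : ℝ} (ht : 0 < t)
    (hη : HasDerivAt η η' t) :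
    HasDerivAt (hardyMultiplier p η)
      (((p - 1) / p) ^ (p - 1) * t ^ (-p) * ((1 - p) * (1 - η t) - t * η')) t := by
  have hpow : t ^ (1 - p) = t ^ (-p) * t := by
    rw [← Real.rpow_add_one ht.ne']
    ring_nf
  refine (((Real.hasDerivAt_rpow_const (p := 1 - p) (.inl ht.ne')).mul
    (hη.const_sub 1)).const_mul (((p - 1) / p) ^ (p - 1))).congr_deriv ?_
  rw [hpow, show 1 - p - 1 = -p by ring]
  ring

theorem hardyMultiplier_rpow_conjExponent (hp : 1 < p) {η : ℝ → ℝ} {t : ℝ} (ht : 0 ≤ t)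
    (hη : η t ≤ 1) :
    hardyMultiplier p η t ^ p.conjExponent =
      ((p - 1) / p) ^ (p - 1) * t ^ (-p) * ((p - 1) / p * (1 - η t) ^ p.conjExponent) := by
  have : 0 < p - 1 := sub_pos.2 hp
  have hk : 0 < (p - 1) / p := by positivity
  have hη' : 0 ≤ 1 - η t := sub_nonneg.2 hη
  have hexp : (p - 1) * p.conjExponent = p :=
    (Real.HolderConjugate.conjExponent hp).sub_one_mul_conj
  have hconst : (((p - 1) / p) ^ (p - 1)) ^ p.conjExponent =
      ((p - 1) / p) ^ (p - 1) * ((p - 1) / p) := by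
    rw [← Real.rpow_mul hk.le, hexp, ← Real.rpow_add_one hk.ne', sub_add_cancel]
  have hpow : (t ^ (1 - p)) ^ p.conjExponent = t ^ (-p) := by
    rw [← Real.rpow_mul ht, ← neg_sub, neg_mul, hexp]
  rw [hardyMultiplier, Real.mul_rpow (by positivity) (by positivity),
    Real.mul_rpow (by positivity) hη', hconst, hpow]
  ring

/-- The terms linear in `η` cancel and the quadratic ones are absorbed by `p * η ^ 2 ≤ t * η'`. -/
theorem riccati_hardyMultiplier (hp : 1 < p) {η : ℝ → ℝ} {η' t : ℝ} (ht : 0 ≤ t)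
    (hη : η t ∈ Icc 0 1) (hη' : p * η t ^ 2 ≤ t * η') :
    ((p - 1) / p) ^ (p - 1) * t ^ (-p) * ((1 - p) * (1 - η t) - t * η') +
        (p - 1) * hardyMultiplier p η t ^ p.conjExponent ≤
      -(((p - 1) / p) ^ p / t ^ p) := by
  have : 0 < p - 1 := sub_pos.2 hp
  have hk : 0 < (p - 1) / p := by positivity
  have hbracket : (1 - p) * (1 - η t) - t * η' +
      (p - 1) * ((p - 1) / p * (1 - η t) ^ p.conjExponent) ≤ -((p - 1) / p) :=
    calc
      _ ≤ (1 - p) * (1 - η t) - p * η t ^ 2 + (p - 1) * ((p - 1) / p *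
            (1 - p.conjExponent * η t + (p.conjExponent * η t) ^ 2)) := by
        gcongr
        exact one_sub_rpow_le (by unfold Real.conjExponent; positivity) hη
      _ = -((p - 1) / p) := by unfold Real.conjExponent; field_simp; ring
  calc
    _ = ((p - 1) / p) ^ (p - 1) * t ^ (-p) * ((1 - p) * (1 - η t) - t * η' +
          (p - 1) * ((p - 1) / p * (1 - η t) ^ p.conjExponent)) := by
      rw [hardyMultiplier_rpow_conjExponent hp ht hη.2]; ring
    _ ≤ ((p - 1) / p) ^ (p - 1) * t ^ (-p) * -((p - 1) / p) := by gcongr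
    _ = -(((p - 1) / p) ^ (p - 1) * ((p - 1) / p) / t ^ p) := by rw [Real.rpow_neg ht]; ring
    _ = -(((p - 1) / p) ^ p / t ^ p) := by rw [← Real.rpow_add_one hk.ne', sub_add_cancel]

/-- The integrand `|u'| ^ p - ((p - 1) / p) ^ p |u| ^ p / t ^ p` of the Hardy inequality on a
half-line, in which `t` is the distance to the boundary point `0`. -/
noncomputable def hardyDensity (p : ℝ) (u : ℝ → ℝ) (t : ℝ) : ℝ :=
  |deriv u t| ^ p - ((p - 1) / p) ^ p / t ^ p * |u t| ^ p

theorem continuous_mul_abs_rpow {w : ℝ → ℝ} {s : Set ℝ} (hp : 0 < p) (hu : Continuous u)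
    (hw : ContinuousOn w s) (hs : IsOpen s) (hsupp : tsupport u ⊆ s) :
    Continuous fun t ↦ w t * |u t| ^ p := by
  have hup : Continuous fun t ↦ |u t| ^ p := hu.abs.rpow_const fun _ ↦ .inr hp.le
  refine (hw.mul hup.continuousOn).continuous_of_tsupport_subset hs ?_
  exact tsupport_mul_subset_right.trans <| (tsupport_comp_subset
    (g := fun y : ℝ ↦ |y| ^ p) (by simp [hp.ne']) u).trans hsupp

theorem intervalIntegrable_hardyDensity (hp : 0 < p) (hu : Continuous u)
    (hsupp : tsupport u ⊆ Ioi 0)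
    (hint : IntervalIntegrable (fun t ↦ |deriv u t| ^ p) volume a b) :
    IntervalIntegrable (hardyDensity p u) volume a b := by
  have hw : ContinuousOn (fun t : ℝ ↦ ((p - 1) / p) ^ p / t ^ p) (Ioi 0) :=
    continuousOn_const.div (Real.continuous_rpow_const hp.le).continuousOn
      fun t ht ↦ (Real.rpow_pos_of_pos ht p).ne'
  exact hint.sub ((continuous_mul_abs_rpow hp hu hw isOpen_Ioi hsupp).intervalIntegrable a b)

theorem hardyMultiplier_sub_le_integral {η η' : ℝ → ℝ} (hp : 1 < p) (ha : 0 ≤ a) (hab : a ≤ b)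
    (hu : Differentiable ℝ u) (hsupp : tsupport u ⊆ Ioi 0)
    (hint : IntervalIntegrable (fun t ↦ |deriv u t| ^ p) volume a b)
    (hη_cont : ContinuousOn η (Icc a b)) (hη_deriv : ∀ t ∈ Ioo a b, HasDerivAt η (η' t) t)
    (hη_mem : ∀ t ∈ Ioo a b, η t ∈ Icc 0 1) (hη' : ∀ t ∈ Ioo a b, p * η t ^ 2 ≤ t * η' t) :
    hardyMultiplier p η b * |u b| ^ p - hardyMultiplier p η a * |u a| ^ p ≤
      ∫ t in a..b, hardyDensity p u t := by
  have hp₀ : 0 < p := by linarith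
  have hpow : ContinuousOn (fun t : ℝ ↦ t ^ (1 - p)) (Ioi 0) :=
    continuousOn_id.rpow_const fun t ht ↦ .inl (ne_of_gt ht)
  have hcont : ContinuousOn (fun t ↦ hardyMultiplier p η t * |u t| ^ p) (Icc a b) := by
    have hpow_mul := continuous_mul_abs_rpow hp₀ hu.continuous hpow isOpen_Ioi hsupp
    have heq : (fun t ↦ hardyMultiplier p η t * |u t| ^ p) =
        fun t ↦ ((p - 1) / p) ^ (p - 1) * (t ^ (1 - p) * |u t| ^ p * (1 - η t)) := by
      funext t
      rw [hardyMultiplier]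
      ring
    rw [heq]
    exact continuousOn_const.mul (hpow_mul.continuousOn.mul (continuousOn_const.sub hη_cont))
  have hpos (t : ℝ) (ht : t ∈ Ioo a b) : 0 < t := ha.trans_lt ht.1
  exact sub_le_integral_of_riccati (.conjExponent hp) hab hcont
    (fun t _ ↦ (hu t).hasDerivAt)
    (fun t ht ↦ hasDerivAt_hardyMultiplier p (hpos t ht) (hη_deriv t ht))
    (fun t ht ↦ hardyMultiplier_nonneg hp.le (hpos t ht).le (hη_mem t ht).2)
    (fun t ht ↦ riccati_hardyMultiplier hp (hpos t ht).le (hη_mem t ht) (hη' t ht))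
    (intervalIntegrable_hardyDensity hp₀ hu.continuous hsupp hint)

/-! ### The one-sided estimate -/

/-- The logarithmic weight `X(t) = (1 - log t)⁻¹`, considered for `0 < t ≤ 1`. -/
noncomputable def logWeight (t : ℝ) : ℝ := (1 - Real.log t)⁻¹

theorem logWeight_mem_Ioc {t : ℝ} (ht : t ∈ Ioc 0 1) : logWeight t ∈ Ioc 0 1 := by
  have hlog : Real.log t ≤ 0 := Real.log_nonpos ht.1.le ht.2
  exact ⟨inv_pos.2 (by linarith), inv_le_one_of_one_le₀ (by linarith)⟩

theorem hasDerivAt_logWeight {t : ℝ} (ht : t ∈ Ioc 0 1) :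
    HasDerivAt logWeight (logWeight t ^ 2 / t) t := by
  have hlog : Real.log t ≤ 0 := Real.log_nonpos ht.1.le ht.2
  refine (((Real.hasDerivAt_log ht.1.ne').const_sub 1).fun_inv (by linarith)).congr_deriv ?_
  rw [logWeight, neg_neg, inv_pow, div_eq_mul_inv, div_eq_mul_inv, mul_comm]

theorem hasDerivAt_logWeight_div {t : ℝ} (ht : 0 < t) (htD : t ≤ D) :
    HasDerivAt (fun t ↦ logWeight (t / D)) (logWeight (t / D) ^ 2 / t) t := by
  have hD : 0 < D := ht.trans_le htD
  refine ((hasDerivAt_logWeight ⟨by positivity, (div_le_one hD).2 htD⟩).comp t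
    ((hasDerivAt_id t).div_const D)).congr_deriv ?_
  field_simp

theorem hardyMultiplier_zero_le_integral (hp : 1 < p) (hx : 0 ≤ x) (hu : Differentiable ℝ u)
    (hsupp : tsupport u ⊆ Ioi 0)
    (hint : IntervalIntegrable (fun t ↦ |deriv u t| ^ p) volume 0 x) :
    hardyMultiplier p 0 x * |u x| ^ p ≤ ∫ t in 0..x, hardyDensity p u t := by
  have hp₀ : p ≠ 0 := by linarith
  have hu₀ : u 0 = 0 := image_eq_zero_of_notMem_tsupport fun h ↦ lt_irrefl (0 : ℝ) (hsupp h)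
  simpa [hu₀, hp₀] using hardyMultiplier_sub_le_integral (η := 0) (η' := 0) hp le_rfl hx
    hu hsupp hint continuousOn_const (fun t _ ↦ hasDerivAt_const t 0) (by simp) (by simp)

theorem neg_hardyMultiplier_logWeight_le_integral (hp : 1 < p) (hx : 0 < x) (hxb : x ≤ b)
    (hbD : b ≤ D) (hu : Differentiable ℝ u) (hsupp : tsupport u ⊆ Ioi 0)
    (hint : IntervalIntegrable (fun t ↦ |deriv u t| ^ p) volume x b) :
    -(hardyMultiplier p (fun t ↦ logWeight (t / D) / p) x * |u x| ^ p) ≤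
      ∫ t in x..b, hardyDensity p u t := by
  have hp₀ : 0 < p := by linarith
  have hb : 0 < b := hx.trans_le hxb
  set η : ℝ → ℝ := fun t ↦ logWeight (t / D) / p with hη
  have hη_deriv (t : ℝ) (ht : t ∈ Icc x b) : HasDerivAt η (logWeight (t / D) ^ 2 / t / p) t :=
    (hasDerivAt_logWeight_div (hx.trans_le ht.1) (ht.2.trans hbD)).div_const p
  have hη_mem (t : ℝ) (ht : t ∈ Icc x b) : η t ∈ Icc 0 1 := by
    have ht₀ : 0 < t := hx.trans_le ht.1
    have hD : 0 < D := hb.trans_le hbD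
    have hX := logWeight_mem_Ioc ⟨div_pos ht₀ hD, (div_le_one hD).2 (ht.2.trans hbD)⟩
    exact ⟨div_nonneg hX.1.le hp₀.le, (div_le_one hp₀).2 (hX.2.trans hp.le)⟩
  have hη_ode (t : ℝ) (ht : t ∈ Ioo x b) :
      p * η t ^ 2 ≤ t * (logWeight (t / D) ^ 2 / t / p) := by
    have ht₀ : 0 < t := hx.trans ht.1
    refine le_of_eq ?_
    simp only [hη]
    field_simp
  have hboundary : 0 ≤ hardyMultiplier p η b * |u b| ^ p :=
    mul_nonneg (hardyMultiplier_nonneg hp.le hb.le (hη_mem b (right_mem_Icc.2 hxb)).2)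
      (by positivity)
  have hriccati := hardyMultiplier_sub_le_integral hp hx.le hxb hu hsupp hint
    (fun t ht ↦ (hη_deriv t ht).continuousAt.continuousWithinAt)
    (fun t ht ↦ hη_deriv t (Ioo_subset_Icc_self ht))
    (fun t ht ↦ hη_mem t (Ioo_subset_Icc_self ht)) hη_ode
  linarith

theorem le_integral_hardyDensity (hp : 1 < p) (hx : 0 < x) (hxb : x ≤ b) (hbD : b ≤ D)
    (hu : Differentiable ℝ u) (hsupp : tsupport u ⊆ Ioi 0)
    (hint : IntervalIntegrable (fun t ↦ |deriv u t| ^ p) volume 0 b) :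
    ((p - 1) / p) ^ (p - 1) / p * (x ^ (1 - p) * logWeight (x / D) * |u x| ^ p) ≤
      ∫ t in 0..b, hardyDensity p u t := by
  have hp₀ : 0 < p := by linarith
  have hmem : x ∈ uIcc 0 b := mem_uIcc_of_le hx.le hxb
  have hint_left := hint.mono_set (uIcc_subset_uIcc_left hmem)
  have hint_right := hint.mono_set (uIcc_subset_uIcc_right hmem)
  have hleft := hardyMultiplier_zero_le_integral hp hx.le hu hsupp hint_left
  have hright := neg_hardyMultiplier_logWeight_le_integral hp hx hxb hbD hu hsupp hint_right
  calc
    _ = hardyMultiplier p 0 x * |u x| ^ p +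
        -(hardyMultiplier p (fun t ↦ logWeight (t / D) / p) x * |u x| ^ p) := by
      simp only [hardyMultiplier, Pi.zero_apply]; ring
    _ ≤ (∫ t in 0..x, hardyDensity p u t) + ∫ t in x..b, hardyDensity p u t :=
      add_le_add hleft hright
    _ = ∫ t in 0..b, hardyDensity p u t :=
      intervalIntegral.integral_add_adjacent_intervals
        (intervalIntegrable_hardyDensity hp₀ hu.continuous hsupp hint_left)
        (intervalIntegrable_hardyDensity hp₀ hu.continuous hsupp hint_right)

theorem integral_hardyDensity_nonneg (hp : 1 < p) (hb : 0 < b) (hu : Differentiable ℝ u)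
    (hsupp : tsupport u ⊆ Ioi 0)
    (hint : IntervalIntegrable (fun t ↦ |deriv u t| ^ p) volume 0 b) :
    0 ≤ ∫ t in 0..b, hardyDensity p u t := by
  refine le_trans ?_ (le_integral_hardyDensity hp hb le_rfl le_rfl hu hsupp hint)
  have : 0 < p - 1 := sub_pos.2 hp
  have hX : 0 < logWeight (b / b) :=
    (logWeight_mem_Ioc ⟨div_pos hb hb, (div_self hb.ne').le⟩).1
  positivity

/-! ### The two-sided estimate -/

/-- The Hardy difference `∫ |u'| ^ p - ((p - 1) / p) ^ p ∫ |u| ^ p / d ^ p` on `(0, L)`, where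
`d(t) = min t (L - t)` is the distance to the boundary. -/
noncomputable def hardyDeficit (p L : ℝ) (u : ℝ → ℝ) : ℝ :=
  (∫ t in Ioo 0 L, |deriv u t| ^ p) -
    ((p - 1) / p) ^ p * ∫ t in Ioo 0 L, |u t| ^ p / (min t (L - t)) ^ p

theorem intervalIntegral_eq_add_reflect {φ : ℝ → ℝ} (hL : 0 ≤ L)
    (hφ : IntervalIntegrable φ volume 0 L) :
    ∫ t in 0..L, φ t = (∫ t in 0..L / 2, φ t) + ∫ t in 0..L / 2, φ (L - t) := by
  have hmem : L / 2 ∈ uIcc 0 L := mem_uIcc_of_le (by linarith) (by linarith)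
  rw [intervalIntegral.integral_comp_sub_left, sub_zero, sub_half,
    intervalIntegral.integral_add_adjacent_intervals
      (hφ.mono_set (uIcc_subset_uIcc_left hmem)) (hφ.mono_set (uIcc_subset_uIcc_right hmem))]

theorem hardyDeficit_eq_add_reflect (hp : 0 < p) (hL : 0 ≤ L) (hu : Continuous u)
    (hsupp : tsupport u ⊆ Ioo 0 L)
    (hint : IntervalIntegrable (fun t ↦ |deriv u t| ^ p) volume 0 L) :
    hardyDeficit p L u = (∫ t in 0..L / 2, hardyDensity p u t) +
      ∫ t in 0..L / 2, hardyDensity p (fun s ↦ u (L - s)) t := by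
  set K := ((p - 1) / p) ^ p with hK
  have hw : ContinuousOn (fun t : ℝ ↦ K / (min t (L - t)) ^ p) (Ioo 0 L) :=
    continuousOn_const.div
      ((by fun_prop : Continuous fun t ↦ min t (L - t)).rpow_const fun _ ↦ .inr hp.le).continuousOn
      fun t ht ↦ (Real.rpow_pos_of_pos (lt_min ht.1 (sub_pos.2 ht.2)) p).ne'
  have hint_potential : IntervalIntegrable (fun t ↦ K / (min t (L - t)) ^ p * |u t| ^ p)
      volume 0 L :=
    (continuous_mul_abs_rpow hp hu hw isOpen_Ioo hsupp).intervalIntegrable 0 L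
  have hdeficit : hardyDeficit p L u =
      ∫ t in 0..L, (|deriv u t| ^ p - K / (min t (L - t)) ^ p * |u t| ^ p) := by
    rw [intervalIntegral.integral_sub hint hint_potential, hardyDeficit,
      ← integral_Ioc_eq_integral_Ioo, ← integral_Ioc_eq_integral_Ioo,
      ← intervalIntegral.integral_of_le hL, ← intervalIntegral.integral_of_le hL,
      ← intervalIntegral.integral_const_mul]
    simp only [← hK, div_mul_eq_mul_div, mul_div_assoc]
  rw [hdeficit, intervalIntegral_eq_add_reflect hL (hint.sub hint_potential)]
  congr 1 <;> refine intervalIntegral.integral_congr fun t ht ↦ ?_ <;>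
    rw [uIcc_of_le (by positivity)] at ht <;> simp only [hardyDensity]
  · rw [min_eq_left (by linarith [ht.2])]
  · rw [deriv_comp_const_sub, abs_neg, sub_sub_cancel, min_eq_right (by linarith [ht.2])]

theorem le_hardyDeficit (hp : 1 < p) (hu : Differentiable ℝ u) (hsupp : tsupport u ⊆ Ioo 0 L)
    (hint : IntervalIntegrable (fun t ↦ |deriv u t| ^ p) volume 0 L) (hD : L / 2 ≤ D)
    (hx : x ∈ Ioo 0 L) :
    ((p - 1) / p) ^ (p - 1) / p *
        ((min x (L - x)) ^ (1 - p) * logWeight (min x (L - x) / D) * |u x| ^ p) ≤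
      hardyDeficit p L u := by
  have hL : 0 < L := hx.1.trans hx.2
  have hmem : L / 2 ∈ uIcc 0 L := mem_uIcc_of_le (by linarith) (by linarith)
  have hsupp_left : tsupport u ⊆ Ioi 0 := hsupp.trans Ioo_subset_Ioi_self
  have hint_left := hint.mono_set (uIcc_subset_uIcc_left hmem)
  set v : ℝ → ℝ := fun s ↦ u (L - s) with hv
  have hv_diff : Differentiable ℝ v := by fun_prop
  have hsupp_right : tsupport v ⊆ Ioi 0 := fun t ht ↦ by
    have hmem_tsupport := tsupport_comp_subset_preimage u (continuous_sub_left L) ht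
    exact sub_lt_self_iff L |>.1 (hsupp hmem_tsupport).2
  have hint_right : IntervalIntegrable (fun t ↦ |deriv v t| ^ p) volume 0 (L / 2) := by
    simpa [hv, deriv_comp_const_sub, sub_half] using
      ((hint.mono_set (uIcc_subset_uIcc_right hmem)).comp_sub_left L).symm
  rw [hardyDeficit_eq_add_reflect (by linarith) hL.le hu.continuous hsupp hint]
  rcases le_total x (L / 2) with hxL | hxL
  · rw [min_eq_left (by linarith)]
    exact le_add_of_le_of_nonneg (le_integral_hardyDensity hp hx.1 hxL hD hu hsupp_left hint_left)
      (integral_hardyDensity_nonneg hp (half_pos hL) hv_diff hsupp_right hint_right)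
  · rw [min_eq_right (by linarith)]
    have hright := le_integral_hardyDensity hp (sub_pos.2 hx.2) (by linarith) hD hv_diff
      hsupp_right hint_right
    simp only [hv, sub_sub_cancel] at hright
    exact le_add_of_nonneg_of_le
      (integral_hardyDensity_nonneg hp (half_pos hL) hu hsupp_left hint_left) hright

theorem mul_rpow_mul_rpow_le_of_mul_le {κ U d X J : ℝ} (hp : 0 < p) (hκ : 0 < κ) (hU : 0 ≤ U)
    (hd : 0 ≤ d) (hX : 0 ≤ X) (h : κ * (d ^ (1 - p) * X * U ^ p) ≤ J) :
    U * d ^ (1 / p - 1) * X ^ (1 / p) ≤ κ⁻¹ ^ (1 / p) * J ^ (1 / p) := by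
  have hJ : 0 ≤ J := le_trans (by positivity) h
  calc U * d ^ (1 / p - 1) * X ^ (1 / p) = (d ^ (1 - p) * X * U ^ p) ^ (1 / p) := by
        rw [Real.mul_rpow (by positivity) (by positivity), Real.mul_rpow (by positivity) hX,
          ← Real.rpow_mul hd, ← Real.rpow_mul hU, mul_one_div_cancel hp.ne', Real.rpow_one,
          show (1 - p) * (1 / p) = 1 / p - 1 by field_simp]
        ring
    _ ≤ (κ⁻¹ * J) ^ (1 / p) := by
        refine Real.rpow_le_rpow (by positivity) ?_ (by positivity)
        rwa [← div_eq_inv_mul, le_div_iff₀' hκ]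
    _ = κ⁻¹ ^ (1 / p) * J ^ (1 / p) := Real.mul_rpow (by positivity) hJ

end HardyMorrey

open HardyMorrey in
theorem hardy_morrey_pointwise_interval_general {p L D x : ℝ} {u : ℝ → ℝ} (hp : 1 < p)
    (hu : Differentiable ℝ u) (hsupp : tsupport u ⊆ Ioo 0 L)
    (hint : IntegrableOn (fun t ↦ |deriv u t| ^ p) (Ioo 0 L)) (hD : L / 2 ≤ D)
    (hx : x ∈ Ioo 0 L) :
    |u x| * (min x (L - x)) ^ (1 / p - 1) * logWeight (min x (L - x) / D) ^ (1 / p) ≤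
      (((p - 1) / p) ^ (p - 1) / p)⁻¹ ^ (1 / p) * hardyDeficit p L u ^ (1 / p) := by
  have : 0 < p - 1 := sub_pos.2 hp
  have hL : 0 < L := hx.1.trans hx.2
  have hD₀ : 0 < D := (half_pos hL).trans_le hD
  have hd : 0 < min x (L - x) := lt_min hx.1 (sub_pos.2 hx.2)
  have hdD : min x (L - x) ≤ D := by
    linarith [min_le_left x (L - x), min_le_right x (L - x)]
  have hX : 0 ≤ logWeight (min x (L - x) / D) :=
    (logWeight_mem_Ioc ⟨div_pos hd hD₀, (div_le_one hD₀).2 hdD⟩).1.le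
  have hint' := (intervalIntegrable_iff_integrableOn_Ioo_of_le hL.le).2 hint
  exact mul_rpow_mul_rpow_le_of_mul_le (by linarith) (by positivity) (abs_nonneg _) hd.le hX
    (le_hardyDeficit hp hu hsupp hint' hD hx)

/-- one-dimensional pointwise Hardy–Morrey estimate on `(0,1)`,
distance to the boundary. -/
theorem hardy_morrey_pointwise_interval (p : ℝ) (hp : 1 < p) :
    ∃ c : ℝ, 0 < c ∧
      ∀ u : ℝ → ℝ, ContDiff ℝ (⊤ : ℕ∞) u → HasCompactSupport u →
        tsupport u ⊆ Set.Ioo (0 : ℝ) 1 →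
        ∀ D : ℝ, 1 / 2 ≤ D → ∀ x ∈ Set.Ioo (0 : ℝ) 1,
          |u x| * (min x (1 - x)) ^ (1 / p - 1) *
              ((1 - Real.log (min x (1 - x) / D))⁻¹) ^ (1 / p) ≤
            c * ((∫ t in Set.Ioo (0 : ℝ) 1, |deriv u t| ^ p)
              - ((p - 1) / p) ^ p *
                  ∫ t in Set.Ioo (0 : ℝ) 1, |u t| ^ p / (min t (1 - t)) ^ p) ^ (1 / p) := by
  have : 0 < p - 1 := sub_pos.2 hp
  refine ⟨(((p - 1) / p) ^ (p - 1) / p)⁻¹ ^ (1 / p), by positivity, fun u hu _ hsupp D hD x hx ↦ ?_⟩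
  have hint : Continuous fun t ↦ |deriv u t| ^ p :=
    (hu.continuous_deriv (by simp)).abs.rpow_const fun _ ↦ .inr (by linarith)
  exact hardy_morrey_pointwise_interval_general hp (hu.differentiable (by simp)) hsupp
    (hint.integrableOn_Icc.mono_set Ioo_subset_Icc_self) hD hx
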